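/- Let H be a separable infinite-dimensional complex Hilbert space and let T ∈ B(H) be a (p,k)-quasihyponormal operator for some 0 < p ≤ 1 and positive integer k. Then T has Bishop's property (β). -/

import Mathlib

open ContinuousLinearMap Filter

set_option synthInstance.maxHeartbeats 400000

/-- The `p`-th power of an operator (intended for positive operators), via the
continuous functional calculus. -/
noncomputable def opRpow {H : Type*} [NormedAddCommGroup H] [InnerProductSpace ℂ H]
    [CompleteSpace H] (A : H →L[ℂ] H) (p : ℝ) : H →L[ℂ] H :=
  cfc (fun x : ℝ => x ^ p) A

/-- The logarithm of an operator (intended for positive invertible operators), via the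
continuous functional calculus. -/
noncomputable def opLog {H : Type*} [NormedAddCommGroup H] [InnerProductSpace ℂ H]
    [CompleteSpace H] (A : H →L[ℂ] H) : H →L[ℂ] H :=
  cfc Real.log A

/-- `|A| = (A*A)^{1/2}`, via the continuous functional calculus. -/
noncomputable def opAbs {H : Type*} [NormedAddCommGroup H] [InnerProductSpace ℂ H]
    [CompleteSpace H] (A : H →L[ℂ] H) : H →L[ℂ] H :=
  cfc (fun x : ℝ => Real.sqrt x) (adjoint A * A)

/-- `A` is hyponormal: `A*A ≥ AA*`. -/
def Hyponormal {H : Type*} [NormedAddCommGroup H] [InnerProductSpace ℂ H]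
    [CompleteSpace H] (A : H →L[ℂ] H) : Prop :=
  A * adjoint A ≤ adjoint A * A

/-- `A` is `p`-hyponormal: `(A*A)^p ≥ (AA*)^p`. -/
def PHyponormal {H : Type*} [NormedAddCommGroup H] [InnerProductSpace ℂ H]
    [CompleteSpace H] (A : H →L[ℂ] H) (p : ℝ) : Prop :=
  opRpow (A * adjoint A) p ≤ opRpow (adjoint A * A) p

/-- `A` is `(p,k)`-quasihyponormal: `A*^k ((A*A)^p − (AA*)^p) A^k ≥ 0`. -/
def PKQuasihyponormal {H : Type*} [NormedAddCommGroup H] [InnerProductSpace ℂ H]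
    [CompleteSpace H] (A : H →L[ℂ] H) (p : ℝ) (k : ℕ) : Prop :=
  0 ≤ (adjoint A) ^ k * (opRpow (adjoint A * A) p - opRpow (A * adjoint A) p) * A ^ k

/-- `A` is log-hyponormal: `A` invertible and `log(A*A) ≥ log(AA*)`. -/
def LogHyponormal {H : Type*} [NormedAddCommGroup H] [InnerProductSpace ℂ H]
    [CompleteSpace H] (A : H →L[ℂ] H) : Prop :=
  IsUnit A ∧ opLog (A * adjoint A) ≤ opLog (adjoint A * A)

/-- `A` is a class A operator: `|A²| ≥ |A|²`. -/
def ClassA {H : Type*} [NormedAddCommGroup H] [InnerProductSpace ℂ H]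
    [CompleteSpace H] (A : H →L[ℂ] H) : Prop :=
  opAbs A ^ 2 ≤ opAbs (A ^ 2)

/-- `A` is paranormal: `‖Ax‖² ≤ ‖A²x‖ ‖x‖` for all `x`. -/
def Paranormal {H : Type*} [NormedAddCommGroup H] [InnerProductSpace ℂ H]
    (A : H →L[ℂ] H) : Prop :=
  ∀ x : H, ‖A x‖ ^ 2 ≤ ‖A (A x)‖ * ‖x‖

/-- `A` is normaloid: its norm equals its spectral radius. -/
def Normaloid {H : Type*} [NormedAddCommGroup H] [InnerProductSpace ℂ H]
    (A : H →L[ℂ] H) : Prop :=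
  spectralRadius ℂ A = ‖A‖₊

/-- `T` has Bishop's property (β): whenever `(T - z) fₙ(z) → 0` uniformly on compact subsets
of an open set `D ⊆ ℂ`, for analytic `H`-valued functions `fₙ` on `D`, also `fₙ → 0`
uniformly on compact subsets of `D`. -/
def HasBishopBeta {H : Type*} [NormedAddCommGroup H] [InnerProductSpace ℂ H]
    (T : H →L[ℂ] H) : Prop :=
  ∀ D : Set ℂ, IsOpen D → ∀ f : ℕ → ℂ → H,
    (∀ n, AnalyticOnNhd ℂ (f n) D) →
    (∀ K : Set ℂ, K ⊆ D → IsCompact K →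
      TendstoUniformlyOn (fun n z => T (f n z) - z • f n z) 0 atTop K) →
    ∀ K : Set ℂ, K ⊆ D → IsCompact K →
      TendstoUniformlyOn (fun n z => f n z) 0 atTop K

/-- `T` has the single valued extension property: there is no nonzero analytic `H`-valued
function `f` on a nonempty open `D ⊆ ℂ` with `(T - z) f(z) ≡ 0` on `D`. -/
def HasSVEP {H : Type*} [NormedAddCommGroup H] [InnerProductSpace ℂ H]
    (T : H →L[ℂ] H) : Prop :=
  ∀ D : Set ℂ, IsOpen D → D.Nonempty → ∀ f : ℂ → H,
    AnalyticOnNhd ℂ f D → (∀ z ∈ D, T (f z) - z • f z = 0) →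
    ∀ z ∈ D, f z = 0

/-- The restriction of `A` to an invariant subspace `M`, as an operator on `M`. -/
noncomputable def restrictOp {H : Type*} [NormedAddCommGroup H] [InnerProductSpace ℂ H]
    (A : H →L[ℂ] H) (M : Submodule ℂ H) (h : ∀ x ∈ M, A x ∈ M) : M →L[ℂ] M :=
  (A.comp M.subtypeL).codRestrict M (fun x => h x x.2)

/-!
The hypothesis says that `⟪(T * T†) ^ p x, x⟫ ≤ ⟪(T† * T) ^ p x, x⟫` on the range of `T ^ k`.
Since `T` intertwines `φ(T† * T)` and `φ(T * T†)`, strong monotonicity of `φ(s) = s ^ p` away from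
`0` turns this into `‖(T - z)† x‖ ^ 2 ≤ C * ‖x‖ * ‖(T - z) x‖` for `z` bounded and bounded away
from `0`.

Let `g` take values in the range of `T ^ k` and let `(T - z) g(z)` be of size at most `ε`. For fixed
`w`, `(z - w) * ⟪g w, g z⟫ = ⟪(T - w)† (g w), g z⟫ - ⟪g w, (T - z) (g z)⟫`; the maximum principle on
a circle around `w` together with the inequality above bounds `‖g w‖` linearly in `ε`, provided
`‖g‖` on the disc is comparable to `‖g w‖`, which a weighted maximum point `w` achieves. Applied to
`g = T ^ k ∘ f` this controls `f`, because `T ^ k` acts as `z ^ k` modulo `T - z`. The remaining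
point `z = 0` is recovered, by the maximum principle, from the values on a surrounding circle.
-/

open scoped ComplexConjugate InnerProduct InnerProductSpace Topology
open Metric (ball closedBall sphere)

section RealPower

theorem mul_sub_le_rpow_sub_rpow {p s t : ℝ} (hp0 : 0 ≤ p) (hp1 : p ≤ 1) (ht : 0 ≤ t)
    (hts : t ≤ s) : p * s ^ (p - 1) * (s - t) ≤ s ^ p - t ^ p := by
  refine (convex_Icc 0 s).mul_sub_le_image_sub_of_le_deriv (f := (· ^ p))
    (Real.continuous_rpow_const hp0).continuousOn ?_ ?_ t ⟨ht, hts⟩ s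
    (Set.right_mem_Icc.2 (ht.trans hts)) hts
  · rw [interior_Icc]
    exact fun x hx => (Real.differentiableAt_rpow_const_of_ne p hx.1.ne').differentiableWithinAt
  · rw [interior_Icc]
    intro x hx
    rw [Real.deriv_rpow_const]
    exact mul_le_mul_of_nonneg_left
      (Real.rpow_le_rpow_of_nonpos hx.1 hx.2.le (by linarith)) hp0

theorem mul_sq_sub_le_mul_rpow_sub_of_le_one {p L s t : ℝ} (hp0 : 0 ≤ p) (hp1 : p ≤ 1)
    (hs : s ∈ Set.Icc 0 L) (ht : t ∈ Set.Icc 0 L) :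
    p * L ^ (p - 1) * (s - t) ^ 2 ≤ (s - t) * (s ^ p - t ^ p) := by
  wlog hts : t ≤ s generalizing s t
  · linarith [this ht hs (le_of_not_ge hts)]
  rcases hts.eq_or_lt with rfl | hlt
  · simp
  have hL : L ^ (p - 1) ≤ s ^ (p - 1) :=
    Real.rpow_le_rpow_of_nonpos (ht.1.trans_lt hlt) hs.2 (by linarith)
  calc p * L ^ (p - 1) * (s - t) ^ 2 ≤ p * s ^ (p - 1) * (s - t) ^ 2 := by gcongr
    _ = (s - t) * (p * s ^ (p - 1) * (s - t)) := by ring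
    _ ≤ (s - t) * (s ^ p - t ^ p) :=
      mul_le_mul_of_nonneg_left (mul_sub_le_rpow_sub_rpow hp0 hp1 ht.1 hts) (sub_nonneg.2 hts)

theorem mul_sq_sub_le_mul_rpow_sub_of_one_le {p s t : ℝ} (hp : 1 ≤ p) (hs : 0 ≤ s) (ht : 0 ≤ t) :
    t ^ (p - 1) * (s - t) ^ 2 ≤ (s - t) * (s ^ p - t ^ p) := by
  have hfactor (x : ℝ) (hx : 0 ≤ x) : x ^ p = x ^ (p - 1) * x := by
    rw [← Real.rpow_add_one' hx (by linarith), sub_add_cancel]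
  have hmono : 0 ≤ (s - t) * (s ^ (p - 1) - t ^ (p - 1)) := by
    rcases le_total t s with h | h
    · exact mul_nonneg (sub_nonneg.2 h)
        (sub_nonneg.2 (Real.rpow_le_rpow ht h (sub_nonneg.2 hp)))
    · exact mul_nonneg_of_nonpos_of_nonpos (sub_nonpos.2 h)
        (sub_nonpos.2 (Real.rpow_le_rpow hs h (sub_nonneg.2 hp)))
  rw [hfactor s hs, hfactor t ht]
  linarith [mul_nonneg hs hmono]

theorem exists_pos_mul_sq_sub_le_mul_rpow_sub {p L m : ℝ} (hp : 0 < p) (hL : 0 < L) (hm : 0 < m) :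
    ∃ c > 0, ∀ s ∈ Set.Icc 0 L, ∀ t ∈ Set.Icc m L,
      c * (s - t) ^ 2 ≤ (s - t) * (s ^ p - t ^ p) := by
  rcases le_total p 1 with hp1 | hp1
  · exact ⟨p * L ^ (p - 1), by positivity, fun s hs t ht =>
      mul_sq_sub_le_mul_rpow_sub_of_le_one hp.le hp1 hs ⟨hm.le.trans ht.1, ht.2⟩⟩
  · refine ⟨m ^ (p - 1), by positivity, fun s hs t ht => ?_⟩
    have hmt : m ^ (p - 1) ≤ t ^ (p - 1) := Real.rpow_le_rpow hm.le ht.1 (sub_nonneg.2 hp1)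
    calc m ^ (p - 1) * (s - t) ^ 2 ≤ t ^ (p - 1) * (s - t) ^ 2 := by gcongr
      _ ≤ (s - t) * (s ^ p - t ^ p) :=
        mul_sq_sub_le_mul_rpow_sub_of_one_le hp1 hs.1 (hm.le.trans ht.1)

end RealPower

theorem semiconjBy_cfc {A : Type*} {p : A → Prop} [Ring A] [StarRing A] [Algebra ℝ A]
    [TopologicalSpace A] [IsSemitopologicalRing A] [T2Space A] [ContinuousFunctionalCalculus ℝ A p]
    {x a b : A} (h : SemiconjBy x a b) (ha : p a) (hb : p b) {f : ℝ → ℝ}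
    (hf : ContinuousOn f (spectrum ℝ a ∪ spectrum ℝ b)) :
    SemiconjBy x (cfc f a) (cfc f b) := by
  have hcompact : CompactSpace ↥(spectrum ℝ a ∪ spectrum ℝ b) := isCompact_iff_compactSpace.1 <|
    (ContinuousFunctionalCalculus.isCompact_spectrum a).union
      (ContinuousFunctionalCalculus.isCompact_spectrum b)
  let ιa : C(spectrum ℝ a, ↥(spectrum ℝ a ∪ spectrum ℝ b)) := .inclusion Set.subset_union_left
  let ιb : C(spectrum ℝ b, ↥(spectrum ℝ a ∪ spectrum ℝ b)) := .inclusion Set.subset_union_right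
  have hcfcHom (g : C(↥(spectrum ℝ a ∪ spectrum ℝ b), ℝ)) :
      SemiconjBy x (cfcHom ha (g.comp ιa)) (cfcHom hb (g.comp ιb)) := by
    induction g using ContinuousMap.induction_on_of_compact with
    | const r =>
      change SemiconjBy x (cfcHom ha (algebraMap ℝ _ r)) (cfcHom hb (algebraMap ℝ _ r))
      rw [AlgHomClass.commutes, AlgHomClass.commutes]
      exact (Algebra.commutes r x).symm
    | id | star_id =>
      change SemiconjBy x (cfcHom ha (.restrict _ (.id ℝ))) (cfcHom hb (.restrict _ (.id ℝ)))
      rwa [cfcHom_id ha, cfcHom_id hb]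
    | add g₁ g₂ h₁ h₂ =>
      simpa only [ContinuousMap.add_comp, map_add] using h₁.add_right h₂
    | mul g₁ g₂ h₁ h₂ =>
      simpa only [ContinuousMap.mul_comp, map_mul] using h₁.mul_right h₂
    | frequently g hg =>
      have hclosed : IsClosed {g : C(↥(spectrum ℝ a ∪ spectrum ℝ b), ℝ) |
          SemiconjBy x (cfcHom ha (g.comp ιa)) (cfcHom hb (g.comp ιb))} :=
        isClosed_eq
          (((cfcHom_continuous ha).comp (ContinuousMap.continuous_precomp ιa)).const_mul x)
          (((cfcHom_continuous hb).comp (ContinuousMap.continuous_precomp ιb)).mul_const x)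
      exact hclosed.closure_subset (mem_closure_iff_frequently.2 hg)
  rw [cfc_apply f a ha (hf.mono Set.subset_union_left),
    cfc_apply f b hb (hf.mono Set.subset_union_right)]
  exact hcfcHom ⟨_, hf.domRestrict⟩

section QuadraticForm

theorem reApplyInnerSelf_sub_le {𝕜 E : Type*} [RCLike 𝕜] [SeminormedAddCommGroup E]
    [InnerProductSpace 𝕜 E] (Q : E →L[𝕜] E) (x y : E) :
    Q.reApplyInnerSelf x - Q.reApplyInnerSelf y ≤ ‖Q‖ * ‖x - y‖ * (‖x‖ + ‖y‖) := by
  have hsplit : Q.reApplyInnerSelf x - Q.reApplyInnerSelf y =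
      RCLike.re ⟪Q (x - y), x⟫_𝕜 + RCLike.re ⟪Q y, x - y⟫_𝕜 := by
    simp only [reApplyInnerSelf_apply, map_sub, inner_sub_left, inner_sub_right]
    ring
  calc Q.reApplyInnerSelf x - Q.reApplyInnerSelf y
      = RCLike.re ⟪Q (x - y), x⟫_𝕜 + RCLike.re ⟪Q y, x - y⟫_𝕜 := hsplit
    _ ≤ ‖Q (x - y)‖ * ‖x‖ + ‖Q y‖ * ‖x - y‖ :=
      add_le_add (re_inner_le_norm _ _) (re_inner_le_norm _ _)
    _ ≤ ‖Q‖ * ‖x - y‖ * ‖x‖ + ‖Q‖ * ‖y‖ * ‖x - y‖ := by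
      gcongr <;> exact le_opNorm _ _
    _ = ‖Q‖ * ‖x - y‖ * (‖x‖ + ‖y‖) := by ring

theorem reApplyInnerSelf_mono {𝕜 E : Type*} [RCLike 𝕜] [NormedAddCommGroup E]
    [InnerProductSpace 𝕜 E] {A B : E →L[𝕜] E} (h : A ≤ B) (x : E) :
    A.reApplyInnerSelf x ≤ B.reApplyInnerSelf x := by
  have hsub := h.2 x
  rwa [reApplyInnerSelf_apply, sub_apply, inner_sub_left, map_sub, sub_nonneg] at hsub

variable {H : Type*} [NormedAddCommGroup H] [InnerProductSpace ℂ H] [CompleteSpace H]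

theorem mul_norm_sq_sub_smul_le_inner_cfc {A : H →L[ℂ] H} (hA : IsSelfAdjoint A) {φ : ℝ → ℝ}
    (hφ : ContinuousOn φ (spectrum ℝ A)) {c t : ℝ}
    (hc : ∀ s ∈ spectrum ℝ A, c * (s - t) ^ 2 ≤ (s - t) * (φ s - φ t)) (x : H) :
    c * ‖A x - t • x‖ ^ 2 ≤ (⟪cfc φ A x - φ t • x, A x - t • x⟫_ℂ).re := by
  have hshift : cfc (fun s => s - t) A = A - algebraMap ℝ _ t := by
    rw [cfc_sub .., cfc_id' ℝ A, cfc_const t A]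
  have hφshift : cfc (fun s => φ s - φ t) A = cfc φ A - algebraMap ℝ _ (φ t) := by
    rw [cfc_sub .., cfc_const (φ t) A]
  have hmono := cfc_mono (a := A) hc
  rw [cfc_const_mul .., cfc_pow .., cfc_mul .., hshift, hφshift] at hmono
  have hsymm : (A - algebraMap ℝ (H →L[ℂ] H) t : H →ₗ[ℂ] H).IsSymmetric :=
    (hA.sub (.algebraMap _ (.all t))).isSymmetric
  have hsq : (c • (A - algebraMap ℝ (H →L[ℂ] H) t) ^ 2).reApplyInnerSelf x =
      c * ‖A x - t • x‖ ^ 2 := by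
    rw [reApplyInnerSelf_apply, sq, smul_apply, RCLike.real_smul_eq_coe_smul (K := ℂ),
      inner_smul_real_left, RCLike.smul_re]
    exact congrArg (c * ·)
      ((congrArg Complex.re (hsymm _ x)).trans (inner_self_eq_norm_sq (𝕜 := ℂ) _))
  have hprod : ((A - algebraMap ℝ (H →L[ℂ] H) t) *
      (cfc φ A - algebraMap ℝ (H →L[ℂ] H) (φ t))).reApplyInnerSelf x =
      (⟪cfc φ A x - φ t • x, A x - t • x⟫_ℂ).re :=
    congrArg Complex.re (hsymm _ x)
  exact hsq.symm.trans_le ((reApplyInnerSelf_mono hmono x).trans_eq hprod)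

theorem mul_norm_sq_adjoint_apply_sub_le (T : H →L[ℂ] H) {φ : ℝ → ℝ}
    (hφ : ContinuousOn φ (spectrum ℝ (T† * T) ∪ spectrum ℝ (T * T†))) {c : ℝ} {z : ℂ}
    (hc : ∀ s ∈ spectrum ℝ (T† * T),
      c * (s - ‖z‖ ^ 2) ^ 2 ≤ (s - ‖z‖ ^ 2) * (φ s - φ (‖z‖ ^ 2))) {x : H}
    (hx : (cfc φ (T * T†)).reApplyInnerSelf x ≤ (cfc φ (T† * T)).reApplyInnerSelf x) :
    c * ‖(T†) (T x) - ‖z‖ ^ 2 • x‖ ^ 2 ≤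
      ‖cfc φ (T * T†) - algebraMap ℝ (H →L[ℂ] H) (φ (‖z‖ ^ 2))‖ * (‖T‖ + ‖z‖) *
        (‖x‖ * ‖T x - z • x‖) := by
  set t := ‖z‖ ^ 2 with ht
  set P := cfc φ (T† * T)
  set Q := cfc φ (T * T†)
  set S := Q - algebraMap ℝ (H →L[ℂ] H) (φ t)
  have hP : IsSelfAdjoint (T† * T) := .star_mul_self T
  have hQ : IsSelfAdjoint (T * T†) := .mul_star_self T
  have hsemiconj : SemiconjBy T P Q := semiconjBy_cfc (mul_assoc ..).symm hP hQ hφ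
  have hPT : T (P x) = Q (T x) := congr($hsemiconj x)
  have hSapply (y : H) : S y = Q y - φ t • y := rfl
  have hform : (⟪P x - φ t • x, (T†) (T x) - t • x⟫_ℂ).re ≤
      S.reApplyInnerSelf (T x) - S.reApplyInnerSelf (z • x) := by
    have hTx : S.reApplyInnerSelf (T x) = (⟪P x - φ t • x, (T†) (T x)⟫_ℂ).re := by
      rw [adjoint_inner_right, map_sub, hPT, map_smul_of_tower, reApplyInnerSelf_apply, hSapply,
        RCLike.re_eq_complex_re]
    have hzx : S.reApplyInnerSelf (z • x) ≤ (⟪P x - φ t • x, t • x⟫_ℂ).re := by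
      rw [reApplyInnerSelf_smul, ← ht, RCLike.real_smul_eq_coe_smul (K := ℂ) t x,
        inner_smul_real_right, Complex.smul_re, smul_eq_mul]
      gcongr
      rw [reApplyInnerSelf_apply, hSapply, inner_sub_left, inner_sub_left, map_sub, Complex.sub_re]
      exact sub_le_sub_right hx _
    rw [inner_sub_right, Complex.sub_re, ← hTx]
    exact sub_le_sub_left hzx _
  calc c * ‖(T†) (T x) - t • x‖ ^ 2
      ≤ (⟪P x - φ t • x, (T†) (T x) - t • x⟫_ℂ).re :=
      mul_norm_sq_sub_smul_le_inner_cfc hP (hφ.mono Set.subset_union_left) hc x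
    _ ≤ S.reApplyInnerSelf (T x) - S.reApplyInnerSelf (z • x) := hform
    _ ≤ ‖S‖ * ‖T x - z • x‖ * (‖T x‖ + ‖z • x‖) := reApplyInnerSelf_sub_le S _ _
    _ ≤ ‖S‖ * ‖T x - z • x‖ * (‖T‖ * ‖x‖ + ‖z‖ * ‖x‖) := by
      gcongr
      · exact le_opNorm T x
      · exact norm_smul_le z x
    _ = ‖S‖ * (‖T‖ + ‖z‖) * (‖x‖ * ‖T x - z • x‖) := by ring

end QuadraticForm

theorem spectrum_star_mul_self_subset_Icc {A : Type*} [CStarAlgebra A] (a : A) :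
    spectrum ℝ (star a * a) ⊆ Set.Icc 0 (‖a‖ ^ 2) := by
  intro s hs
  have hnorm := IsometricContinuousFunctionalCalculus.norm_spectrum_le _ hs
    (IsSelfAdjoint.star_mul_self a)
  rw [CStarRing.norm_star_mul_self, ← sq] at hnorm
  exact ⟨spectrum_star_mul_self_nonneg s hs, (le_abs_self s).trans hnorm⟩

section AdjointEstimate

variable {H : Type*} [NormedAddCommGroup H] [InnerProductSpace ℂ H] [CompleteSpace H]

theorem exists_norm_sq_adjoint_apply_sub_le (T : H →L[ℂ] H) {p δ R : ℝ} (hp : 0 < p)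
    (hδ : 0 < δ) (hR : 0 < R) :
    ∃ C ≥ 0, ∀ (x : H) (z : ℂ), δ ≤ ‖z‖ → ‖z‖ ≤ R →
      (opRpow (T * T†) p).reApplyInnerSelf x ≤ (opRpow (T† * T) p).reApplyInnerSelf x →
      ‖(T†) (T x) - ‖z‖ ^ 2 • x‖ ^ 2 ≤ C * (‖x‖ * ‖T x - z • x‖) := by
  obtain ⟨c, hc0, hc⟩ := exists_pos_mul_sq_sub_le_mul_rpow_sub (L := ‖T‖ ^ 2 + R ^ 2)
    hp (by positivity) (pow_pos hδ 2)
  set K := ‖opRpow (T * T†) p‖ + (R ^ 2) ^ p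
  refine ⟨K * (‖T‖ + R) / c, by positivity, fun x z hδz hzR hx => ?_⟩
  have hspec (s : ℝ) (hs : s ∈ spectrum ℝ (T† * T)) :
      c * (s - ‖z‖ ^ 2) ^ 2 ≤ (s - ‖z‖ ^ 2) * (s ^ p - (‖z‖ ^ 2) ^ p) := by
    have hsT := spectrum_star_mul_self_subset_Icc T hs
    exact hc s ⟨hsT.1, hsT.2.trans (le_add_of_nonneg_right (sq_nonneg R))⟩ _
      ⟨by gcongr, (pow_le_pow_left₀ (norm_nonneg z) hzR 2).trans
        (le_add_of_nonneg_left (sq_nonneg ‖T‖))⟩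
  have hcont : Continuous (fun s : ℝ => s ^ p) := Real.continuous_rpow_const hp.le
  have hnorm : ‖opRpow (T * T†) p - algebraMap ℝ (H →L[ℂ] H) ((‖z‖ ^ 2) ^ p)‖ ≤ K := by
    refine (norm_sub_le _ _).trans (add_le_add_right ?_ _)
    rw [norm_algebraMap, Real.norm_of_nonneg (by positivity)]
    exact (mul_le_of_le_one_right (by positivity) norm_id_le).trans (by gcongr)
  rw [div_mul_eq_mul_div, le_div_iff₀' hc0]
  calc c * ‖(T†) (T x) - ‖z‖ ^ 2 • x‖ ^ 2
      ≤ ‖opRpow (T * T†) p - algebraMap ℝ (H →L[ℂ] H) ((‖z‖ ^ 2) ^ p)‖ * (‖T‖ + ‖z‖) *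
          (‖x‖ * ‖T x - z • x‖) :=
        mul_norm_sq_adjoint_apply_sub_le T hcont.continuousOn hspec hx
    _ ≤ K * (‖T‖ + R) * (‖x‖ * ‖T x - z • x‖) := by gcongr

theorem norm_mul_norm_adjoint_apply_sub_le (T : H →L[ℂ] H) (x : H) (z : ℂ) :
    ‖z‖ * ‖(T†) x - conj z • x‖ ≤ ‖(T†) (T x) - ‖z‖ ^ 2 • x‖ + ‖T‖ * ‖T x - z • x‖ := by
  have hsplit : z • ((T†) x - conj z • x) =
      ((T†) (T x) - ‖z‖ ^ 2 • x) - (T†) (T x - z • x) := by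
    rw [map_sub, map_smul, smul_sub, smul_smul, Complex.mul_conj',
      RCLike.real_smul_eq_coe_smul (K := ℂ)]
    push_cast
    abel
  calc ‖z‖ * ‖(T†) x - conj z • x‖ = ‖z • ((T†) x - conj z • x)‖ := (norm_smul _ _).symm
    _ ≤ ‖(T†) (T x) - ‖z‖ ^ 2 • x‖ + ‖(T†) (T x - z • x)‖ := hsplit ▸ norm_sub_le _ _
    _ ≤ ‖(T†) (T x) - ‖z‖ ^ 2 • x‖ + ‖T‖ * ‖T x - z • x‖ := by
      gcongr
      exact (le_opNorm _ _).trans_eq (by rw [LinearIsometryEquiv.norm_map])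

theorem exists_norm_sq_adjoint_sub_conj_smul_le (T : H →L[ℂ] H) {p δ R : ℝ} (hp : 0 < p)
    (hδ : 0 < δ) (hR : 0 < R) :
    ∃ C ≥ 0, ∀ (x : H) (z : ℂ), δ ≤ ‖z‖ → ‖z‖ ≤ R →
      (opRpow (T * T†) p).reApplyInnerSelf x ≤ (opRpow (T† * T) p).reApplyInnerSelf x →
      ‖(T†) x - conj z • x‖ ^ 2 ≤ C * (‖x‖ * ‖T x - z • x‖) := by
  obtain ⟨C, hC0, hC⟩ := exists_norm_sq_adjoint_apply_sub_le T hp hδ hR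
  refine ⟨2 * (C + ‖T‖ ^ 2 * (‖T‖ + R)) / δ ^ 2, by positivity, fun x z hδz hzR hx => ?_⟩
  have hTz : ‖T x - z • x‖ ≤ (‖T‖ + R) * ‖x‖ :=
    calc ‖T x - z • x‖ ≤ ‖T x‖ + ‖z • x‖ := norm_sub_le _ _
      _ ≤ ‖T‖ * ‖x‖ + R * ‖x‖ := by
        rw [norm_smul]
        gcongr
        exact le_opNorm T x
      _ = (‖T‖ + R) * ‖x‖ := by ring
  have hroot : δ * ‖(T†) x - conj z • x‖ ≤
      ‖(T†) (T x) - ‖z‖ ^ 2 • x‖ + ‖T‖ * ‖T x - z • x‖ :=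
    (by gcongr : δ * ‖(T†) x - conj z • x‖ ≤ ‖z‖ * ‖(T†) x - conj z • x‖).trans
      (norm_mul_norm_adjoint_apply_sub_le T x z)
  rw [div_mul_eq_mul_div, le_div_iff₀' (by positivity)]
  calc δ ^ 2 * ‖(T†) x - conj z • x‖ ^ 2 = (δ * ‖(T†) x - conj z • x‖) ^ 2 := by ring
    _ ≤ (‖(T†) (T x) - ‖z‖ ^ 2 • x‖ + ‖T‖ * ‖T x - z • x‖) ^ 2 := by gcongr
    _ ≤ 2 * (‖(T†) (T x) - ‖z‖ ^ 2 • x‖ ^ 2 + (‖T‖ * ‖T x - z • x‖) ^ 2) := add_sq_le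
    _ = 2 * (‖(T†) (T x) - ‖z‖ ^ 2 • x‖ ^ 2 + ‖T‖ ^ 2 * (‖T x - z • x‖ * ‖T x - z • x‖)) := by
      ring
    _ ≤ 2 * (C * (‖x‖ * ‖T x - z • x‖) + ‖T‖ ^ 2 * ((‖T‖ + R) * ‖x‖ * ‖T x - z • x‖)) := by
      gcongr
      exact hC x z hδz hzR hx
    _ = 2 * (C + ‖T‖ ^ 2 * (‖T‖ + R)) * (‖x‖ * ‖T x - z • x‖) := by ring

end AdjointEstimate

section LocalEstimate

-- The weight `(ρ - dist z z₀) ^ 2` vanishes on the sphere and drops by a factor of at most `4` on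
-- the ball around `w` that reaches halfway to it, so maximise the weighted function.
theorem exists_closedBall_subset_forall_le_four_mul {X : Type*} [PseudoMetricSpace X]
    [ProperSpace X] {h : X → ℝ} {z₀ : X} {ρ : ℝ} (hρ : 0 < ρ)
    (hcont : ContinuousOn h (closedBall z₀ ρ)) (h0 : ∀ z ∈ closedBall z₀ ρ, 0 ≤ h z) :
    ∃ w r, 0 < r ∧ r ≤ ρ / 2 ∧ closedBall w r ⊆ closedBall z₀ ρ ∧
      (∀ z ∈ closedBall w r, h z ≤ 4 * h w) ∧
      ∀ z ∈ closedBall z₀ (ρ / 2), ρ ^ 2 * h z ≤ 16 * (r ^ 2 * h w) := by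
  obtain ⟨w, hw, hmax⟩ : ∃ w, dist w z₀ < ρ ∧ ∀ z ∈ closedBall z₀ ρ,
      (ρ - dist z z₀) ^ 2 * h z ≤ (ρ - dist w z₀) ^ 2 * h w := by
    obtain ⟨w, hw, hmax⟩ := (isCompact_closedBall z₀ ρ).exists_isMaxOn
      ⟨z₀, Metric.mem_closedBall_self hρ.le⟩ (f := fun z => (ρ - dist z z₀) ^ 2 * h z)
      (by fun_prop)
    rcases (Metric.mem_closedBall.1 hw).lt_or_eq with hlt | heq
    · exact ⟨w, hlt, hmax⟩
    · refine ⟨z₀, by simpa using hρ, fun z hz => (hmax hz).trans ?_⟩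
      have hz₀ := h0 z₀ (Metric.mem_closedBall_self hρ.le)
      simp only [heq, sub_self, zero_pow two_ne_zero, zero_mul]
      positivity
  set r := (ρ - dist w z₀) / 2 with hr
  have hsub : closedBall w r ⊆ closedBall z₀ ρ :=
    Metric.closedBall_subset_closedBall' (by linarith)
  have hr0 : 0 < r := by linarith
  have hweight : ρ - dist w z₀ = 2 * r := by rw [hr]; ring
  rw [hweight] at hmax
  refine ⟨w, r, hr0, by linarith [dist_nonneg (x := w) (y := z₀)], hsub, fun z hz => ?_,
    fun z hz => ?_⟩
  · have hrz : r ≤ ρ - dist z z₀ := by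
      linarith [dist_triangle z w z₀, Metric.mem_closedBall.1 hz]
    have hz0 := h0 z (hsub hz)
    refine le_of_mul_le_mul_left ?_ (pow_pos hr0 2)
    calc r ^ 2 * h z ≤ (ρ - dist z z₀) ^ 2 * h z := by gcongr
      _ ≤ (2 * r) ^ 2 * h w := hmax z (hsub hz)
      _ = r ^ 2 * (4 * h w) := by ring
  · have hzρ : z ∈ closedBall z₀ ρ := Metric.closedBall_subset_closedBall (by linarith) hz
    have hρz : ρ / 2 ≤ ρ - dist z z₀ := by linarith [Metric.mem_closedBall.1 hz]
    have hz0 := h0 z hzρ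
    calc ρ ^ 2 * h z = 4 * ((ρ / 2) ^ 2 * h z) := by ring
      _ ≤ 4 * ((ρ - dist z z₀) ^ 2 * h z) := by gcongr
      _ ≤ 4 * ((2 * r) ^ 2 * h w) := by linarith [hmax z hzρ]
      _ = 16 * (r ^ 2 * h w) := by ring

theorem le_add_two_mul_of_le_add_of_sq_le_mul {x y a b : ℝ} (ha : 0 ≤ a) (hb : 0 ≤ b)
    (hxy : x ≤ y + a) (hy : y ^ 2 ≤ b * x) : x ≤ b + 2 * a := by
  by_contra! hx
  have hx0 : 0 < x := by linarith
  have hsq : (x - a) ^ 2 ≤ y ^ 2 := pow_le_pow_left₀ (by linarith) (by linarith) 2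
  have hlt : b * x < (x - 2 * a) * x := mul_lt_mul_of_pos_right (by linarith) hx0
  linarith [sq_nonneg a, sub_sq x a]

variable {H : Type*} [NormedAddCommGroup H] [InnerProductSpace ℂ H] [CompleteSpace H]

theorem mul_norm_inner_le_of_forall_closedBall (T : H →L[ℂ] H) {g : ℂ → H} {w : ℂ} {r M ε : ℝ}
    (hr : 0 < r) (hg : DifferentiableOn ℂ g (closedBall w r))
    (hM : ∀ z ∈ closedBall w r, ‖g z‖ ≤ M)
    (hε : ∀ z ∈ closedBall w r, ‖T (g z) - z • g z‖ ≤ ε) (u : H) :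
    r * ‖⟪u, g w⟫_ℂ‖ ≤ ‖(T†) u - conj w • u‖ * M + ‖u‖ * ε := by
  have hsplit (z : ℂ) : (z - w) * ⟪u, g z⟫_ℂ =
      ⟪(T†) u - conj w • u, g z⟫_ℂ - ⟪u, T (g z) - z • g z⟫_ℂ := by
    rw [inner_sub_left, inner_sub_right, adjoint_inner_left, inner_smul_left, inner_smul_right,
      Complex.conj_conj]
    ring
  have hsphere (z : ℂ) (hz : z ∈ sphere w r) :
      ‖⟪u, g z⟫_ℂ‖ ≤ (‖(T†) u - conj w • u‖ * M + ‖u‖ * ε) / r := by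
    have hzr := Metric.sphere_subset_closedBall hz
    rw [le_div_iff₀' hr]
    calc r * ‖⟪u, g z⟫_ℂ‖ = ‖(z - w) * ⟪u, g z⟫_ℂ‖ := by
          rw [norm_mul, ← mem_sphere_iff_norm.1 hz]
      _ ≤ ‖⟪(T†) u - conj w • u, g z⟫_ℂ‖ + ‖⟪u, T (g z) - z • g z⟫_ℂ‖ :=
          hsplit z ▸ norm_sub_le _ _
      _ ≤ ‖(T†) u - conj w • u‖ * ‖g z‖ + ‖u‖ * ‖T (g z) - z • g z‖ :=
          add_le_add (norm_inner_le_norm _ _) (norm_inner_le_norm _ _)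
      _ ≤ ‖(T†) u - conj w • u‖ * M + ‖u‖ * ε := by
          gcongr
          exacts [hM z hzr, hε z hzr]
  have hdiff : DifferentiableOn ℂ (fun z => ⟪u, g z⟫_ℂ) (closedBall w r) :=
    (innerSL ℂ u).differentiable.comp_differentiableOn hg
  rw [← le_div_iff₀' hr]
  exact Complex.norm_le_of_forall_mem_frontier_norm_le Metric.isBounded_ball
    (hdiff.diffContOnCl_ball subset_rfl)
    (fun z hz => hsphere z (Metric.frontier_ball_subset_sphere hz))
    (subset_closure (Metric.mem_ball_self hr))

theorem norm_le_of_norm_sq_adjoint_sub_le (T : H →L[ℂ] H) {g : ℂ → H} {z₀ : ℂ} {ρ C ε : ℝ}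
    (hρ : 0 < ρ) (hC : 0 ≤ C) (hg : DifferentiableOn ℂ g (closedBall z₀ ρ))
    (hadj : ∀ z ∈ closedBall z₀ ρ,
      ‖(T†) (g z) - conj z • g z‖ ^ 2 ≤ C * (‖g z‖ * ‖T (g z) - z • g z‖))
    (hε : ∀ z ∈ closedBall z₀ ρ, ‖T (g z) - z • g z‖ ≤ ε) {z : ℂ}
    (hz : z ∈ closedBall z₀ (ρ / 2)) :
    ‖g z‖ ≤ 16 * (16 * C + ρ) / ρ ^ 2 * ε := by
  obtain ⟨w, r, hr, hrρ, hsub, hfour, hhalf⟩ := exists_closedBall_subset_forall_le_four_mul hρ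
    hg.continuousOn.norm (fun z _ => norm_nonneg (g z))
  have hw : w ∈ closedBall z₀ ρ := hsub (Metric.mem_closedBall_self hr.le)
  have hε0 : 0 ≤ ε := (norm_nonneg _).trans (hε w hw)
  set b := ‖(T†) (g w) - conj w • g w‖
  have hb : b ^ 2 ≤ C * (‖g w‖ * ε) :=
    (hadj w hw).trans (by gcongr; exact hε w hw)
  have hlinear : r * ‖g w‖ ≤ 4 * b + ε := by
    rcases (norm_nonneg (g w)).eq_or_lt with h0 | hpos
    · rw [← h0, mul_zero]
      positivity
    · have hinner := mul_norm_inner_le_of_forall_closedBall T hr (hg.mono hsub) hfour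
        (fun z hz => hε z (hsub hz)) (g w)
      rw [inner_self_eq_norm_sq_to_K, norm_pow, RCLike.norm_ofReal, abs_norm] at hinner
      refine le_of_mul_le_mul_right ?_ hpos
      linarith
  have hquad : r ^ 2 * ‖g w‖ ≤ 16 * C * ε + 2 * (r * ε) := by
    refine le_add_two_mul_of_le_add_of_sq_le_mul (y := 4 * (r * b)) (by positivity)
      (by positivity) ?_ ?_
    · calc r ^ 2 * ‖g w‖ = r * (r * ‖g w‖) := by ring
        _ ≤ r * (4 * b + ε) := by gcongr
        _ = 4 * (r * b) + r * ε := by ring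
    · calc (4 * (r * b)) ^ 2 = 16 * r ^ 2 * b ^ 2 := by ring
        _ ≤ 16 * r ^ 2 * (C * (‖g w‖ * ε)) := by gcongr
        _ = 16 * C * ε * (r ^ 2 * ‖g w‖) := by ring
  rw [div_mul_eq_mul_div, le_div_iff₀' (by positivity)]
  calc ρ ^ 2 * ‖g z‖ ≤ 16 * (r ^ 2 * ‖g w‖) := hhalf z hz
    _ ≤ 16 * (16 * C * ε + 2 * (r * ε)) := by gcongr
    _ ≤ 16 * (16 * C * ε + 2 * (ρ / 2 * ε)) := by gcongr
    _ = 16 * (16 * C + ρ) * ε := by ring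

end LocalEstimate

section BishopEstimate

variable {E : Type*} [NormedAddCommGroup E] [NormedSpace ℂ E]

/-- The a priori estimate behind property (β) near `z₀`: an analytic function on
`closedBall z₀ ρ` is controlled on the concentric ball of half the radius by the size of
`(T - z) f(z)`, with a constant independent of the function. -/
def HasBishopEstimate (T : E →L[ℂ] E) (z₀ : ℂ) (ρ : ℝ) : Prop :=
  ∃ M : ℝ, ∀ (f : ℂ → E) (ε : ℝ), DifferentiableOn ℂ f (closedBall z₀ ρ) →
    (∀ z ∈ closedBall z₀ ρ, ‖T (f z) - z • f z‖ ≤ ε) →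
    ∀ z ∈ closedBall z₀ (ρ / 2), ‖f z‖ ≤ M * ε

theorem tendstoLocallyUniformlyOn_zero_of_hasBishopEstimate {ι : Type*} {l : Filter ι}
    {T : E →L[ℂ] E} {D : Set ℂ} (hD : IsOpen D)
    (hT : ∀ z ∈ D, ∀ᶠ ρ in 𝓝[>] 0, HasBishopEstimate T z ρ) {f : ι → ℂ → E}
    (hf : ∀ n, DifferentiableOn ℂ (f n) D)
    (hlim : TendstoLocallyUniformlyOn (fun n z => T (f n z) - z • f n z) 0 l D) :
    TendstoLocallyUniformlyOn f 0 l D := by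
  rw [Metric.tendstoLocallyUniformlyOn_iff]
  intro η hη z hz
  obtain ⟨ρ, ⟨⟨M, hM⟩, hsub⟩, hρ⟩ := ((hT z hz).and
    ((eventually_closedBall_subset (hD.mem_nhds hz)).filter_mono
      nhdsWithin_le_nhds)).and self_mem_nhdsWithin |>.exists
  obtain ⟨ε, hε, hMε⟩ := exists_pos_mul_lt hη M
  refine ⟨closedBall z (ρ / 2), mem_nhdsWithin_of_mem_nhds
    (Metric.closedBall_mem_nhds z (half_pos hρ)), ?_⟩
  have hunif := (tendstoLocallyUniformlyOn_iff_forall_isCompact hD).1 hlim _ hsub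
    (isCompact_closedBall z ρ)
  filter_upwards [Metric.tendstoUniformlyOn_iff.1 hunif ε hε] with n hn y hy
  rw [Pi.zero_apply, dist_zero_left]
  refine (hM (f n) ε ((hf n).mono hsub) (fun x hx => ?_) y hy).trans_lt hMε
  rw [← dist_zero_left]
  exact (hn x hx).le

theorem tendstoLocallyUniformlyOn_zero_of_diff_singleton {ι : Type*} {l : Filter ι} {D : Set ℂ}
    (hD : IsOpen D) {f : ι → ℂ → E} (hf : ∀ n, DifferentiableOn ℂ (f n) D) {w : ℂ}
    (hlim : TendstoLocallyUniformlyOn f 0 l (D \ {w})) : TendstoLocallyUniformlyOn f 0 l D := by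
  have hDw : IsOpen (D \ {w}) := hD.sdiff isClosed_singleton
  rw [Metric.tendstoLocallyUniformlyOn_iff]
  intro η hη z hz
  rcases eq_or_ne z w with rfl | hzw
  · obtain ⟨r, hr, hsub⟩ := Metric.nhds_basis_closedBall.mem_iff.1 (hD.mem_nhds hz)
    have hsphere : sphere z r ⊆ D \ {z} := fun y hy =>
      ⟨hsub (Metric.sphere_subset_closedBall hy), Metric.ne_of_mem_sphere hy hr.ne'⟩
    have hunif := (tendstoLocallyUniformlyOn_iff_forall_isCompact hDw).1 hlim _ hsphere
      (isCompact_sphere z r)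
    refine ⟨ball z r, mem_nhdsWithin_of_mem_nhds (Metric.ball_mem_nhds z hr), ?_⟩
    filter_upwards [Metric.tendstoUniformlyOn_iff.1 hunif (η / 2) (half_pos hη)] with n hn y hy
    rw [Pi.zero_apply, dist_zero_left]
    refine (Complex.norm_le_of_forall_mem_frontier_norm_le Metric.isBounded_ball
      ((hf n).diffContOnCl_ball hsub) (fun x hx => ?_) (subset_closure hy)).trans_lt
        (half_lt_self hη)
    simpa using (hn x (Metric.frontier_ball_subset_sphere hx)).le
  · obtain ⟨t, ht, hsmall⟩ := Metric.tendstoLocallyUniformlyOn_iff.1 hlim η hη z ⟨hz, hzw⟩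
    rw [hDw.nhdsWithin_eq ⟨hz, hzw⟩] at ht
    exact ⟨t, mem_nhdsWithin_of_mem_nhds ht, hsmall⟩

theorem hasBishopBeta_of_forall_ne_hasBishopEstimate {H : Type*} [NormedAddCommGroup H]
    [InnerProductSpace ℂ H] {T : H →L[ℂ] H} (w : ℂ)
    (hT : ∀ z ≠ w, ∀ᶠ ρ in 𝓝[>] 0, HasBishopEstimate T z ρ) : HasBishopBeta T := by
  intro D hD f hf hlim
  have hdiff (n : ℕ) : DifferentiableOn ℂ (f n) D := (hf n).differentiableOn
  refine (tendstoLocallyUniformlyOn_iff_forall_isCompact hD).1 ?_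
  replace hlim := (tendstoLocallyUniformlyOn_iff_forall_isCompact hD).2 hlim
  exact tendstoLocallyUniformlyOn_zero_of_diff_singleton hD hdiff
    (tendstoLocallyUniformlyOn_zero_of_hasBishopEstimate (hD.sdiff isClosed_singleton)
      (fun z hz => hT z hz.2) (fun n => (hdiff n).mono Set.sdiff_subset)
      (hlim.mono Set.sdiff_subset))

end BishopEstimate

theorem exists_norm_pow_apply_sub_le {𝕜 E : Type*} [NontriviallyNormedField 𝕜]
    [SeminormedAddCommGroup E] [NormedSpace 𝕜 E] (T : E →L[𝕜] E) {R : ℝ} (hR : 0 ≤ R) (k : ℕ) :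
    ∃ C ≥ 0, ∀ (x : E) (z : 𝕜), ‖z‖ ≤ R → ‖(T ^ k) x - z ^ k • x‖ ≤ C * ‖T x - z • x‖ := by
  induction k with
  | zero => exact ⟨0, le_rfl, fun x z _ => by simp⟩
  | succ k ih =>
    obtain ⟨C, hC0, hC⟩ := ih
    refine ⟨‖T ^ k‖ + R * C, by positivity, fun x z hz => ?_⟩
    have hsplit : (T ^ (k + 1)) x - z ^ (k + 1) • x =
        (T ^ k) (T x - z • x) + z • ((T ^ k) x - z ^ k • x) := by
      rw [pow_succ, mul_apply_eq_comp, map_sub, map_smul, smul_sub, smul_smul, ← pow_succ']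
      abel
    calc ‖(T ^ (k + 1)) x - z ^ (k + 1) • x‖
        ≤ ‖(T ^ k) (T x - z • x)‖ + ‖z • ((T ^ k) x - z ^ k • x)‖ :=
          hsplit ▸ norm_add_le _ _
      _ ≤ ‖T ^ k‖ * ‖T x - z • x‖ + R * (C * ‖T x - z • x‖) := by
          rw [norm_smul]
          gcongr
          exacts [le_opNorm _ _, hC x z hz]
      _ = (‖T ^ k‖ + R * C) * ‖T x - z • x‖ := by ring

theorem norm_mem_Icc_of_mem_closedBall {E : Type*} [SeminormedAddCommGroup E] {z z₀ : E} {ρ : ℝ}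
    (hz : z ∈ closedBall z₀ ρ) : ‖z‖ ∈ Set.Icc (‖z₀‖ - ρ) (‖z₀‖ + ρ) := by
  rw [mem_closedBall_iff_norm] at hz
  exact ⟨by linarith [norm_sub_norm_le z₀ z, norm_sub_rev z₀ z],
    by linarith [norm_sub_norm_le z z₀]⟩

section PKQuasihyponormal

variable {H : Type*} [NormedAddCommGroup H] [InnerProductSpace ℂ H] [CompleteSpace H]
  {T : H →L[ℂ] H} {p : ℝ} {k : ℕ}

theorem PKQuasihyponormal.reApplyInnerSelf_le (hT : PKQuasihyponormal T p k) (y : H) :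
    (opRpow (T * T†) p).reApplyInnerSelf ((T ^ k) y) ≤
      (opRpow (T† * T) p).reApplyInnerSelf ((T ^ k) y) := by
  have hform := ((nonneg_iff_isPositive _).1 hT).re_inner_nonneg_left y
  have hstar : (T†) ^ k = (T ^ k)† := (star_pow T k).symm
  rw [hstar, mul_apply_eq_comp, mul_apply_eq_comp, adjoint_inner_left, sub_apply, inner_sub_left,
    map_sub] at hform
  exact sub_nonneg.1 hform

theorem PKQuasihyponormal.exists_norm_pow_apply_le (hT : PKQuasihyponormal T p k) (hp : 0 < p)
    {z₀ : ℂ} {ρ : ℝ} (hρ : 0 < ρ) (hz₀ : 2 * ρ ≤ ‖z₀‖) :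
    ∃ M : ℝ, ∀ (f : ℂ → H) (ε : ℝ), DifferentiableOn ℂ f (closedBall z₀ ρ) →
      (∀ z ∈ closedBall z₀ ρ, ‖T (f z) - z • f z‖ ≤ ε) →
      ∀ z ∈ closedBall z₀ (ρ / 2), ‖(T ^ k) (f z)‖ ≤ M * ε := by
  obtain ⟨C, hC0, hC⟩ := exists_norm_sq_adjoint_sub_conj_smul_le T hp hρ
    (by positivity : 0 < ‖z₀‖ + ρ)
  refine ⟨16 * (16 * C + ρ) / ρ ^ 2 * ‖T ^ k‖, fun f ε hf hε z hz => ?_⟩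
  rw [mul_assoc]
  refine norm_le_of_norm_sq_adjoint_sub_le T (g := fun z => (T ^ k) (f z)) hρ hC0
    ((T ^ k).differentiable.comp_differentiableOn hf) (fun y hy => ?_) (fun y hy => ?_) hz
  · obtain ⟨hlower, hupper⟩ := norm_mem_Icc_of_mem_closedBall hy
    exact hC _ y (by linarith) hupper (hT.reApplyInnerSelf_le (f y))
  · have hcomm : T ((T ^ k) (f y)) - y • (T ^ k) (f y) = (T ^ k) (T (f y) - y • f y) := by
      rw [map_sub, map_smul, ← mul_apply_eq_comp, ← mul_apply_eq_comp, (Commute.self_pow T k).eq]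
    calc ‖T ((T ^ k) (f y)) - y • (T ^ k) (f y)‖
        = ‖(T ^ k) (T (f y) - y • f y)‖ := congrArg norm hcomm
      _ ≤ ‖T ^ k‖ * ε := (le_opNorm _ _).trans (by gcongr; exact hε y hy)

theorem PKQuasihyponormal.hasBishopEstimate (hT : PKQuasihyponormal T p k) (hp : 0 < p)
    {z₀ : ℂ} {ρ : ℝ} (hρ : 0 < ρ) (hz₀ : 2 * ρ ≤ ‖z₀‖) : HasBishopEstimate T z₀ ρ := by
  obtain ⟨M, hM⟩ := hT.exists_norm_pow_apply_le hp hρ hz₀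
  obtain ⟨C, hC0, hC⟩ := exists_norm_pow_apply_sub_le T (by positivity : 0 ≤ ‖z₀‖ + ρ) k
  refine ⟨(M + C) / ρ ^ k, fun f ε hf hε z hz => ?_⟩
  have hzρ : z ∈ closedBall z₀ ρ := Metric.closedBall_subset_closedBall (by linarith) hz
  obtain ⟨hlower, hupper⟩ := norm_mem_Icc_of_mem_closedBall hzρ
  have hρz : ρ ≤ ‖z‖ := by linarith
  rw [div_mul_eq_mul_div, le_div_iff₀' (by positivity)]
  calc ρ ^ k * ‖f z‖ ≤ ‖z‖ ^ k * ‖f z‖ := by gcongr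
    _ = ‖z ^ k • f z‖ := by rw [norm_smul, norm_pow]
    _ ≤ ‖(T ^ k) (f z)‖ + ‖(T ^ k) (f z) - z ^ k • f z‖ := norm_le_insert _ _
    _ ≤ M * ε + C * ε := by
      gcongr
      · exact hM f ε hf hε z hz
      · exact (hC (f z) z hupper).trans (by gcongr; exact hε z hzρ)
    _ = (M + C) * ε := by ring

theorem pkQuasihyponormal_hasBishopBeta_general (hp : 0 < p) (hT : PKQuasihyponormal T p k) :
    HasBishopBeta T := by
  refine hasBishopBeta_of_forall_ne_hasBishopEstimate 0 fun z hz => ?_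
  filter_upwards [Ioo_mem_nhdsGT (half_pos (norm_pos_iff.2 hz))] with ρ hρ
  exact hT.hasBishopEstimate hp hρ.1 (by linarith [hρ.2])

end PKQuasihyponormal

theorem pkQuasihyponormal_hasBishopBeta {H : Type*} [NormedAddCommGroup H]
    [InnerProductSpace ℂ H] [CompleteSpace H] [TopologicalSpace.SeparableSpace H]
    (hinf : ¬ FiniteDimensional ℂ H)
    (T : H →L[ℂ] H) (p : ℝ) (hp0 : 0 < p) (hp1 : p ≤ 1) (k : ℕ) (hk : 0 < k)
    (hT : PKQuasihyponormal T p k) : HasBishopBeta T :=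
  pkQuasihyponormal_hasBishopBeta_general hp0 hT
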